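/- As k → ∞, the Derrida–Hilhorst approximation satisfies L_k[G_k] = (1/C_k) ∫_ℝ F_▷(y)/(1 + e^y) dy + O(e^{−k}) and also L_k[G_k] = (1/C_k) ∫_ℝ F_◁(y)/(1 + e^y) dy + O(e^{−k}). -/

import Mathlib

open MeasureTheory ProbabilityTheory Real Filter Set
open scoped ENNReal

noncomputable def hkfun (k x : ℝ) : ℝ :=
  Real.log ((Real.exp (-k) + Real.exp x) / (1 + Real.exp (x - k)))

noncomputable def hY (y : ℝ) : ℝ := y + Real.log (1 + Real.exp (-y))

/-- A σ-finite measure ν is invariant for the chain Y_{n+1} = z_{n+1} + hY (Y_n),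
where the increments have density ζ. -/
def IsInvariantY (ζ : ℝ → ℝ) (ν : Measure ℝ) : Prop :=
  ∀ g : ℝ → ℝ≥0∞, Measurable g →
    ∫⁻ z, g z ∂ν = ∫⁻ y, ∫⁻ z, g (z + hY y) * ENNReal.ofReal (ζ z) ∂volume ∂ν

noncomputable def Fs (ν : Measure ℝ) (x : ℝ) : ℝ := (ν (Set.Iic x)).toReal

noncomputable def CkDH (νl νr : Measure ℝ) (k : ℝ) : ℝ := Fs νr k + Fs νl k

/-- The Derrida--Hilhorst tail function. -/
noncomputable def GkDH (νl νr : Measure ℝ) (k x : ℝ) : ℝ :=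
  if 0 ≤ x then Fs νr (k - x) / CkDH νl νr k else 1 - Fs νl (x + k) / CkDH νl νr k

noncomputable def Lk (k : ℝ) (G : ℝ → ℝ) : ℝ := ∫ x, G x / (1 + Real.exp (k - x))

/-!
Let `κ = ν.map hY` describe the chain just before an increment `z` of law `μ` is added, so that
stationarity reads `ν = μ ∗ κ`. The integral of `Fs ν - Fs κ` over the line is computed twice.

Since `Fs ν x - Fs κ x` is the `μ`-average of `Fs κ (x - z) - Fs κ x`, and `Fs κ` differs from a
ramp of slope one by an integrable function, the linear terms in `z` average out and the integral
is half the second moment of `μ`. By the layer-cake formula it is also `∫ (hY y - y) ∂ν`, and as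
`hY y - y` is the integral of `1 / (1 + exp x)` over `x ≥ y`, this is `∫ Fs ν y / (1 + exp y)`.
Reflecting the increments preserves their second moment, so the integrals for `νl` and `νr` agree.

Finally `GkDH νl νr k x` equals `Fs νr (k - x) / CkDH νl νr k` for `x ≥ 0`. On `x < 0` the weight
`1 / (1 + exp (k - x))` is at most `exp (-k) * exp x`, which makes the discrepancy `O(exp (-k))`.
-/

open Asymptotics

/-! ### Increments of a ramp -/

/-- The ramp of slope one and offset `c`, the model for a distribution function that vanishes on
the negative half-line and satisfies `F x ≈ x + c` at infinity. -/
noncomputable def ramp (c x : ℝ) : ℝ := (Ioi 0).indicator (· + c) x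

/-- The increment of `ramp c` from `x` to `x - z`, minus its first-order prediction. The prediction
is linear in `z`, so it disappears on averaging over a centred `z`. -/
noncomputable def rampRemainder (c x z : ℝ) : ℝ :=
  ramp c (x - z) - ramp c x + (Ioi 0).indicator 1 x * z

lemma rampRemainder_eq_indicator_uIoc (c x z : ℝ) :
    rampRemainder c x z =
      (if 0 ≤ z then 1 else -1) * (uIoc 0 z).indicator (fun x => z - x - c) x := by
  rcases le_total 0 z with hz | hz
  · simp only [rampRemainder, ramp, uIoc_of_le hz, indicator_apply, mem_Ioi, mem_Ioc, Pi.one_apply]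
    grind
  · simp only [rampRemainder, ramp, uIoc_of_ge hz, indicator_apply, mem_Ioi, mem_Ioc, Pi.one_apply]
    grind

lemma abs_rampRemainder_le (c x z : ℝ) :
    |rampRemainder c x z| ≤ (uIoc 0 z).indicator (fun _ => |z| + |c|) x := by
  have hsign : |if 0 ≤ z then (1 : ℝ) else -1| = 1 := by split_ifs <;> simp
  rw [rampRemainder_eq_indicator_uIoc, abs_mul, hsign, one_mul]
  by_cases hx : x ∈ uIoc 0 z
  · simp only [indicator_of_mem hx]
    have hzx : |z - x| ≤ |z| := by
      simpa using abs_sub_right_of_mem_uIcc (uIoc_subset_uIcc hx)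
    exact (abs_sub _ _).trans (by gcongr)
  · simp [indicator_of_notMem hx]

lemma measurable_rampRemainder (c : ℝ) :
    Measurable fun p : ℝ × ℝ => rampRemainder c p.1 p.2 := by
  have hramp : Measurable (ramp c) := (measurable_id.add_const c).indicator measurableSet_Ioi
  have hstep : Measurable ((Ioi (0 : ℝ)).indicator (1 : ℝ → ℝ)) :=
    measurable_one.indicator measurableSet_Ioi
  unfold rampRemainder
  fun_prop

lemma integrable_rampRemainder_left (c z : ℝ) : Integrable fun x => rampRemainder c x z := by
  refine Integrable.mono' ?_
    ((measurable_rampRemainder c).comp measurable_prodMk_right).aestronglyMeasurable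
    (Eventually.of_forall fun x => abs_rampRemainder_le c x z)
  exact (integrable_indicator_iff measurableSet_uIoc).2 (integrableOn_const (by simp [uIoc]))

lemma integral_rampRemainder (c z : ℝ) : ∫ x, rampRemainder c x z = z ^ 2 / 2 - c * z := by
  calc ∫ x, rampRemainder c x z
      = ∫ x in (0 : ℝ)..z, (z - x - c) := by
        simp_rw [rampRemainder_eq_indicator_uIoc]
        rw [integral_const_mul, integral_indicator measurableSet_uIoc, ← smul_eq_mul,
          ← intervalIntegral.intervalIntegral_eq_integral_uIoc]
    _ = z ^ 2 / 2 - c * z := by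
        rw [intervalIntegral.integral_comp_sub_left (fun u => u - c),
          intervalIntegral.integral_comp_sub_right (fun u => u), integral_id]
        ring

lemma integral_abs_rampRemainder_le (c z : ℝ) :
    ∫ x, |rampRemainder c x z| ≤ z ^ 2 + |c| * |z| := by
  calc ∫ x, |rampRemainder c x z|
      ≤ ∫ x, (uIoc 0 z).indicator (fun _ => |z| + |c|) x :=
        integral_mono (integrable_rampRemainder_left c z).abs
          ((integrable_indicator_iff measurableSet_uIoc).2 (integrableOn_const (by simp [uIoc])))
          fun x => abs_rampRemainder_le c x z
    _ = z ^ 2 + |c| * |z| := by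
        rw [integral_indicator_const _ measurableSet_uIoc, uIoc, Real.volume_real_Ioc_of_le
          min_le_max, max_sub_min_eq_abs, ← sq_abs z, smul_eq_mul,
          sub_zero]
        ring

section IncrementLaw

variable {μ : Measure ℝ} {K : ℝ → ℝ} {c : ℝ}

lemma integrable_rampRemainder [IsFiniteMeasure μ] (hμ : MemLp id 2 μ) :
    Integrable (fun p : ℝ × ℝ => rampRemainder c p.1 p.2) (volume.prod μ) := by
  have hmeas := measurable_rampRemainder c
  refine (integrable_prod_iff' hmeas.aestronglyMeasurable).2
    ⟨Eventually.of_forall (integrable_rampRemainder_left c), ?_⟩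
  have hbound : Integrable (fun z => z ^ 2 + |c| * |z|) μ :=
    hμ.integrable_sq.add ((hμ.integrable one_le_two).abs.const_mul _)
  refine hbound.mono' hmeas.stronglyMeasurable.norm.integral_prod_left'.aestronglyMeasurable
    (Eventually.of_forall fun z => ?_)
  rw [Real.norm_of_nonneg (integral_nonneg fun x => norm_nonneg _)]
  exact integral_abs_rampRemainder_le c z

/-- The increment of `K` from `x` to `x - z`, compensated by the term `z * 1_{x > 0}` so that it
becomes jointly integrable when `K` differs from a ramp by an integrable function. -/
noncomputable def compensatedIncrement (K : ℝ → ℝ) (x z : ℝ) : ℝ :=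
  K (x - z) - K x + (Ioi 0).indicator 1 x * z

lemma compensatedIncrement_eq (K : ℝ → ℝ) (c x z : ℝ) :
    compensatedIncrement K x z = rampRemainder c x z
      + ((K (x - z) - ramp c (x - z)) - (K x - ramp c x)) := by
  unfold compensatedIncrement rampRemainder
  ring

lemma integrable_compensatedIncrement [IsFiniteMeasure μ] (hμ : MemLp id 2 μ)
    (hK : Integrable fun x => K x - ramp c x) :
    Integrable (fun p : ℝ × ℝ => compensatedIncrement K p.1 p.2) (volume.prod μ) := by
  have hshift : Integrable (fun p : ℝ × ℝ => K (p.1 - p.2) - ramp c (p.1 - p.2))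
      (volume.prod μ) := by
    simpa using (integrable_const (1 : ℝ)).convolution_integrand (ν := μ)
      (ContinuousLinearMap.mul ℝ ℝ) hK
  simp_rw [compensatedIncrement_eq K c]
  exact (integrable_rampRemainder hμ).add (hshift.sub (hK.comp_fst μ))

lemma integral_compensatedIncrement_left (hK : Integrable fun x => K x - ramp c x) (z : ℝ) :
    ∫ x, compensatedIncrement K x z = z ^ 2 / 2 - c * z := by
  have hshift := hK.comp_sub_right z
  simp_rw [compensatedIncrement_eq K c]
  rw [integral_add (integrable_rampRemainder_left c z) (by exact hshift.sub hK),
    integral_sub hshift hK, integral_sub_right_eq_self (fun x => K x - ramp c x), sub_self,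
    add_zero, integral_rampRemainder]

lemma ae_integral_compensatedIncrement_right [IsFiniteMeasure μ] (hμ : MemLp id 2 μ)
    (hmean : ∫ z, z ∂μ = 0) (hK : Integrable fun x => K x - ramp c x) :
    ∀ᵐ x, ∫ z, compensatedIncrement K x z ∂μ = ∫ z, (K (x - z) - K x) ∂μ := by
  filter_upwards [(integrable_compensatedIncrement hμ hK).prod_right_ae] with x hx
  have hid : Integrable (fun z => z) μ := hμ.integrable one_le_two
  have hlin : Integrable (fun z => (Ioi (0 : ℝ)).indicator 1 x * z) μ := hid.const_mul _
  calc ∫ z, compensatedIncrement K x z ∂μ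
      = ∫ z, compensatedIncrement K x z ∂μ - ∫ z, (Ioi (0 : ℝ)).indicator 1 x * z ∂μ := by
        rw [integral_const_mul, hmean, mul_zero, sub_zero]
    _ = ∫ z, (K (x - z) - K x) ∂μ := by
        rw [← integral_sub hx hlin]
        simp only [compensatedIncrement, add_sub_cancel_right]

lemma integrable_integral_increment [IsFiniteMeasure μ] (hμ : MemLp id 2 μ)
    (hmean : ∫ z, z ∂μ = 0) (hK : Integrable fun x => K x - ramp c x) :
    Integrable fun x => ∫ z, (K (x - z) - K x) ∂μ :=
  (integrable_compensatedIncrement hμ hK).integral_prod_left.congr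
    (ae_integral_compensatedIncrement_right hμ hmean hK)

lemma integral_integral_increment [IsFiniteMeasure μ] (hμ : MemLp id 2 μ)
    (hmean : ∫ z, z ∂μ = 0) (hK : Integrable fun x => K x - ramp c x) :
    ∫ x, ∫ z, (K (x - z) - K x) ∂μ = (∫ z, z ^ 2 ∂μ) / 2 := by
  have hid : Integrable (fun z => z) μ := hμ.integrable one_le_two
  have hsq : Integrable (fun z => z ^ 2) μ := hμ.integrable_sq
  calc ∫ x, ∫ z, (K (x - z) - K x) ∂μ
      = ∫ x, ∫ z, compensatedIncrement K x z ∂μ :=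
        (integral_congr_ae (ae_integral_compensatedIncrement_right hμ hmean hK)).symm
    _ = ∫ z, (∫ x, compensatedIncrement K x z) ∂μ :=
        integral_integral_swap (integrable_compensatedIncrement hμ hK)
    _ = ∫ z, (z ^ 2 / 2 - c * z) ∂μ := by
        simp_rw [integral_compensatedIncrement_left hK]
    _ = (∫ z, z ^ 2 ∂μ) / 2 := by
        rw [integral_sub (hsq.div_const 2) (hid.const_mul c), integral_const_mul, hmean,
           integral_div, mul_zero, sub_zero]

end IncrementLaw

/-! ### Distribution functions and layer cake formulas -/

section MeasureIic

variable {ν : Measure ℝ}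

lemma sigmaFinite_of_measure_Iic_lt_top (hfin : ∀ x, ν (Iic x) < ⊤) : SigmaFinite ν := by
  have : IsLocallyFiniteMeasure ν :=
    ⟨fun x => ⟨Iic (x + 1), Iic_mem_nhds (lt_add_one x), hfin _⟩⟩
  infer_instance

lemma measurable_measure_Iic (ν : Measure ℝ) : Measurable fun x => ν (Iic x) :=
  Monotone.measurable fun _ _ hab => measure_mono (Iic_subset_Iic.2 hab)

lemma lintegral_measure_Iic_mul [SFinite ν] (μ : Measure ℝ) [SFinite μ] {w : ℝ → ℝ≥0∞}
    (hw : Measurable w) :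
    ∫⁻ x, ν (Iic x) * w x ∂μ = ∫⁻ y, (∫⁻ x in Ici y, w x ∂μ) ∂ν := by
  have hS : MeasurableSet {p : ℝ × ℝ | p.2 ≤ p.1} := measurableSet_le measurable_snd measurable_fst
  calc ∫⁻ x, ν (Iic x) * w x ∂μ
      = ∫⁻ x, ν (Iic x) ∂(μ.withDensity w) := by
        rw [lintegral_withDensity_eq_lintegral_mul _ hw (measurable_measure_Iic ν)]
        simp only [Pi.mul_apply, mul_comm]
    _ = ((μ.withDensity w).prod ν) {p : ℝ × ℝ | p.2 ≤ p.1} := (Measure.prod_apply hS).symm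
    _ = ∫⁻ y, μ.withDensity w (Ici y) ∂ν := Measure.prod_apply_symm hS
    _ = ∫⁻ y, (∫⁻ x in Ici y, w x ∂μ) ∂ν := by
        simp_rw [withDensity_apply w measurableSet_Ici]

lemma lintegral_measure_Iic_sub_map [SFinite ν] {h : ℝ → ℝ} (hh : Measurable h)
    (hle : ∀ y, y ≤ h y) (hfin : ∀ x, ν (Iic x) < ⊤) :
    ∫⁻ x, (ν (Iic x) - ν.map h (Iic x)) = ∫⁻ y, ENNReal.ofReal (h y - y) ∂ν := by
  have hS : MeasurableSet {p : ℝ × ℝ | p.1 ∈ Ico p.2 (h p.2)} :=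
    (measurableSet_le measurable_snd measurable_fst).inter
      (measurableSet_lt measurable_fst (hh.comp measurable_snd))
  calc ∫⁻ x, (ν (Iic x) - ν.map h (Iic x))
      = ∫⁻ x, ν (Iic x \ h ⁻¹' Iic x) := by
        refine lintegral_congr fun x => ?_
        have hsub : h ⁻¹' Iic x ⊆ Iic x := fun y hy => (hle y).trans hy
        rw [Measure.map_apply hh measurableSet_Iic, measure_sdiff hsub
          (hh measurableSet_Iic).nullMeasurableSet ((measure_mono hsub).trans_lt (hfin x)).ne]
    _ = (volume.prod ν) {p : ℝ × ℝ | p.1 ∈ Ico p.2 (h p.2)} := by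
        rw [Measure.prod_apply hS]
        refine lintegral_congr fun x => congrArg ν ?_
        ext y
        simp
    _ = ∫⁻ y, volume (Ico y (h y)) ∂ν := Measure.prod_apply_symm hS
    _ = ∫⁻ y, ENNReal.ofReal (h y - y) ∂ν := by
        simp_rw [Real.volume_Ico]

lemma Fs_nonneg (ν : Measure ℝ) (x : ℝ) : 0 ≤ Fs ν x := ENNReal.toReal_nonneg

lemma monotone_Fs (hfin : ∀ x, ν (Iic x) < ⊤) : Monotone (Fs ν) := fun _ b hab =>
  ENNReal.toReal_mono (hfin b).ne (measure_mono (Iic_subset_Iic.2 hab))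

lemma measurable_Fs (ν : Measure ℝ) : Measurable (Fs ν) :=
  (measurable_measure_Iic ν).ennreal_toReal

lemma ofReal_Fs (hfin : ∀ x, ν (Iic x) < ⊤) (x : ℝ) : ENNReal.ofReal (Fs ν x) = ν (Iic x) :=
  ENNReal.ofReal_toReal (hfin x).ne

variable {μ κ : Measure ℝ}

lemma conv_Iic (μ κ : Measure ℝ) [SFinite κ] (x : ℝ) :
    (μ ∗ κ) (Iic x) = ∫⁻ z, κ (Iic (x - z)) ∂μ := by
  rw [← lintegral_indicator_one measurableSet_Iic,
    Measure.lintegral_conv (measurable_one.indicator measurableSet_Iic)]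
  refine lintegral_congr fun z => ?_
  rw [← lintegral_indicator_one measurableSet_Iic]
  simp only [indicator_apply, mem_Iic, le_sub_iff_add_le', Pi.one_apply]

lemma integrable_Fs_sub_right [SFinite κ] {x : ℝ} (hconv : (μ ∗ κ) (Iic x) < ⊤) :
    Integrable (fun z => Fs κ (x - z)) μ :=
  integrable_toReal_of_lintegral_ne_top
    ((measurable_measure_Iic κ).comp (measurable_const.sub measurable_id)).aemeasurable
    (conv_Iic μ κ x ▸ hconv.ne)

lemma Fs_conv [SFinite κ] (hκ : ∀ x, κ (Iic x) < ⊤) (x : ℝ) :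
    Fs (μ ∗ κ) x = ∫ z, Fs κ (x - z) ∂μ := by
  rw [Fs, conv_Iic]
  exact (integral_toReal
    ((measurable_measure_Iic κ).comp (measurable_const.sub measurable_id)).aemeasurable
    (Eventually.of_forall fun z => hκ (x - z))).symm

lemma Fs_conv_sub [IsProbabilityMeasure μ] [SFinite κ] (hκ : ∀ x, κ (Iic x) < ⊤)
    (hconv : ∀ x, (μ ∗ κ) (Iic x) < ⊤) (x : ℝ) :
    Fs (μ ∗ κ) x - Fs κ x = ∫ z, (Fs κ (x - z) - Fs κ x) ∂μ := by
  rw [integral_sub (integrable_Fs_sub_right (hconv x)) (integrable_const _), Fs_conv hκ]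
  simp

end MeasureIic

/-! ### The stationary chain -/

section StationaryChain

lemma hY_sub_self (y : ℝ) : hY y - y = log (1 + exp (-y)) := add_sub_cancel_left _ _

lemma le_hY (y : ℝ) : y ≤ hY y :=
  le_add_of_nonneg_right (log_nonneg (by linarith [exp_pos (-y)]))

lemma measurable_hY : Measurable hY := by
  unfold hY
  fun_prop

lemma hY_eq_log_one_add_exp (y : ℝ) : hY y = log (1 + exp y) := by
  have hfactor : 1 + exp y = exp y * (1 + exp (-y)) := by
    rw [mul_add, ← exp_add, add_neg_cancel, exp_zero, mul_one, add_comm]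
  rw [hfactor, log_mul (by positivity) (by positivity), log_exp, hY]

lemma hY_pos (y : ℝ) : 0 < hY y := by
  rw [hY_eq_log_one_add_exp]
  exact log_pos (by linarith [exp_pos y])

lemma hY_le_iff {x y : ℝ} (hx : 0 < x) : hY y ≤ x ↔ y ≤ log (exp x - 1) := by
  have hexp : 1 < exp x := one_lt_exp_iff.2 hx
  rw [hY_eq_log_one_add_exp, log_le_iff_le_exp (by positivity), le_log_iff_exp_le (by linarith),
    le_sub_iff_add_le']

lemma hasDerivAt_neg_log_one_add_exp_neg (x : ℝ) :
    HasDerivAt (fun x => -log (1 + exp (-x))) (1 / (1 + exp x)) x := by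
  have hlog := ((((hasDerivAt_neg x).exp).const_add 1).log (by positivity)).neg
  refine hlog.congr_deriv ?_
  rw [exp_neg]
  field_simp
  ring

lemma tendsto_neg_log_one_add_exp_neg :
    Tendsto (fun x : ℝ => -log (1 + exp (-x))) atTop (nhds 0) := by
  simpa using ((tendsto_exp_neg_atTop_nhds_zero.const_add 1).log (by norm_num)).neg

lemma lintegral_Ici_one_div_one_add_exp (y : ℝ) :
    ∫⁻ x in Ici y, ENNReal.ofReal (1 / (1 + exp x)) = ENNReal.ofReal (hY y - y) := by
  have hderiv : ∀ x ∈ Ici y, HasDerivAt (fun x => -log (1 + exp (-x))) (1 / (1 + exp x)) x :=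
    fun x _ => hasDerivAt_neg_log_one_add_exp_neg x
  have hnonneg : ∀ x : ℝ, 0 ≤ 1 / (1 + exp x) := fun x => by positivity
  have hlim := tendsto_neg_log_one_add_exp_neg
  rw [setLIntegral_congr Ioi_ae_eq_Ici.symm, ← ofReal_integral_eq_lintegral_ofReal
      (integrableOn_Ioi_deriv_of_nonneg' hderiv (fun x _ => hnonneg x) hlim)
      (Eventually.of_forall hnonneg),
    integral_Ioi_of_hasDerivAt_of_nonneg' hderiv (fun x _ => hnonneg x) hlim, zero_sub, neg_neg,
    hY_sub_self]

lemma isBigO_log_exp_sub_one_sub_self :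
    (fun x => log (exp x - 1) - x) =O[atTop] fun x => exp (-x) := by
  have hlim : Tendsto (fun x : ℝ => 1 - exp (-x)) atTop (nhds 1) := by
    simpa using tendsto_exp_neg_atTop_nhds_zero.const_sub 1
  have hlog : (fun x => log (1 - exp (-x)) - log 1) =O[atTop] fun x : ℝ => 1 - exp (-x) - 1 :=
    (hasDerivAt_log one_ne_zero).isBigO_sub.comp_tendsto hlim
  refine (hlog.congr' ?_ (Eventually.of_forall fun x => sub_sub_cancel_left 1 _)).of_neg_right
  filter_upwards [eventually_gt_atTop 0] with x hx
  have hfactor : exp x - 1 = exp x * (1 - exp (-x)) := by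
    rw [mul_sub, ← exp_add, add_neg_cancel, exp_zero, mul_one]
  have hpos : 0 < 1 - exp (-x) := sub_pos.2 (exp_lt_one_iff.2 (neg_lt_zero.2 hx))
  rw [hfactor, log_mul (exp_pos x).ne' hpos.ne', log_exp, log_one]
  ring

variable {ν : Measure ℝ} {c ρ : ℝ}

lemma map_hY_Iic_le (ν : Measure ℝ) (x : ℝ) : ν.map hY (Iic x) ≤ ν (Iic x) := by
  rw [Measure.map_apply measurable_hY measurableSet_Iic]
  exact measure_mono fun y hy => (le_hY y).trans hy

lemma map_hY_Iic_lt_top (hfin : ∀ x, ν (Iic x) < ⊤) (x : ℝ) : ν.map hY (Iic x) < ⊤ :=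
  (map_hY_Iic_le ν x).trans_lt (hfin x)

lemma Fs_map_hY_of_nonpos (ν : Measure ℝ) {x : ℝ} (hx : x ≤ 0) : Fs (ν.map hY) x = 0 := by
  have hempty : hY ⁻¹' Iic x = ∅ :=
    eq_empty_of_forall_notMem fun y hy => (hx.trans_lt (hY_pos y)).not_ge hy
  rw [Fs, Measure.map_apply measurable_hY measurableSet_Iic, hempty, measure_empty,
    ENNReal.toReal_zero]

lemma Fs_map_hY_of_pos (ν : Measure ℝ) {x : ℝ} (hx : 0 < x) :
    Fs (ν.map hY) x = Fs ν (log (exp x - 1)) := by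
  have hpre : hY ⁻¹' Iic x = Iic (log (exp x - 1)) := ext fun y => hY_le_iff hx
  rw [Fs, Fs, Measure.map_apply measurable_hY measurableSet_Iic, hpre]

lemma isBigO_Fs_map_hY_sub
    (hasym : (fun x => Fs ν x - (x + c)) =O[atTop] fun x => exp (-ρ * x)) :
    (fun x => Fs (ν.map hY) x - (x + c)) =O[atTop] fun x => exp (-ρ * x) + exp (-x) := by
  let g : ℝ → ℝ := fun x => log (exp x - 1)
  have hshift : (fun x => g x - x) =O[atTop] fun x => exp (-x) := isBigO_log_exp_sub_one_sub_self
  have hshift_lim : Tendsto (fun x => g x - x) atTop (nhds 0) :=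
    hshift.trans_tendsto tendsto_exp_neg_atTop_nhds_zero
  have hg_lim : Tendsto g atTop atTop := by
    simpa using hshift_lim.add_atTop tendsto_id
  have hexp : (fun x => exp (-ρ * g x)) =O[atTop] fun x => exp (-ρ * x) := by
    have hfactor : ∀ x, exp (-ρ * x) * exp (-ρ * (g x - x)) = exp (-ρ * g x) := fun x => by
      rw [← exp_add]
      ring_nf
    have hbdd : (fun x => exp (-ρ * (g x - x))) =O[atTop] fun _ => (1 : ℝ) :=
      ((continuous_exp.tendsto _).comp (hshift_lim.const_mul (-ρ))).isBigO_one ℝ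
    simpa only [hfactor, mul_one] using (isBigO_refl (fun x => exp (-ρ * x)) atTop).mul hbdd
  have hcomp : (fun x => Fs ν (g x) - (g x + c)) =O[atTop] fun x => exp (-ρ * x) :=
    (hasym.comp_tendsto hg_lim).trans hexp
  refine (hcomp.add_add hshift).congr' ?_ (Eventually.of_forall fun x => by simp)
  filter_upwards [eventually_gt_atTop 0] with x hx
  rw [Fs_map_hY_of_pos ν hx]
  ring

lemma integrable_Fs_map_hY_sub_ramp (hfin : ∀ x, ν (Iic x) < ⊤) (hρ : 0 < ρ)
    (hasym : (fun x => Fs ν x - (x + c)) =O[atTop] fun x => exp (-ρ * x)) :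
    Integrable fun x => Fs (ν.map hY) x - ramp c x := by
  have hκ := map_hY_Iic_lt_top hfin
  have hramp : LocallyIntegrable (ramp c) :=
    (continuous_id.add continuous_const).locallyIntegrable.indicator measurableSet_Ioi
  have hbot : (fun x => Fs (ν.map hY) x - ramp c x) =O[atBot] fun _ => (0 : ℝ) := by
    refine EventuallyEq.isBigO ?_
    filter_upwards [eventually_le_atBot 0] with x hx
    rw [Fs_map_hY_of_nonpos ν hx, ramp, indicator_of_notMem (notMem_Ioi.2 hx), sub_zero]
  have htop : (fun x => Fs (ν.map hY) x - ramp c x) =O[atTop] fun x => exp (-ρ * x) + exp (-x) := by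
    refine (isBigO_Fs_map_hY_sub hasym).congr' ?_ EventuallyEq.rfl
    filter_upwards [eventually_gt_atTop 0] with x hx
    rw [ramp, indicator_of_mem (mem_Ioi.2 hx)]
  exact ((monotone_Fs hκ).locallyIntegrable.sub hramp).integrable_of_isBigO_atBot_atTop hbot
    ((integrable_zero _ _ _).integrableAtFilter _) htop
    ⟨Ioi 0, Ioi_mem_atTop 0,
      (exp_neg_integrableOn_Ioi 0 hρ).add (integrableOn_exp_neg_Ioi 0)⟩

/-- `ν` is stationary for the chain `Y ↦ z + hY Y` whose increments `z` have law `μ`. This extends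
`IsInvariantY` to increments without a density. -/
def IsStationaryY (μ ν : Measure ℝ) : Prop := μ ∗ ν.map hY = ν

variable {μ : Measure ℝ}

lemma IsStationaryY.Fs_sub_Fs_map_hY [IsProbabilityMeasure μ] (hν : IsStationaryY μ ν)
    (hfin : ∀ x, ν (Iic x) < ⊤) (x : ℝ) :
    Fs ν x - Fs (ν.map hY) x = ∫ z, (Fs (ν.map hY) (x - z) - Fs (ν.map hY) x) ∂μ := by
  have hconv : μ ∗ ν.map hY = ν := hν
  have hκ := map_hY_Iic_lt_top hfin
  have := sigmaFinite_of_measure_Iic_lt_top hκ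
  simpa only [hconv] using Fs_conv_sub (μ := μ) hκ (by simpa only [hconv] using hfin) x

lemma lintegral_Fs_div_one_add_exp (hfin : ∀ x, ν (Iic x) < ⊤) :
    ∫⁻ y, ENNReal.ofReal (Fs ν y / (1 + exp y)) =
      ∫⁻ x, ENNReal.ofReal (Fs ν x - Fs (ν.map hY) x) := by
  have hκ := map_hY_Iic_lt_top hfin
  have := sigmaFinite_of_measure_Iic_lt_top hfin
  calc ∫⁻ y, ENNReal.ofReal (Fs ν y / (1 + exp y))
      = ∫⁻ y, ν (Iic y) * ENNReal.ofReal (1 / (1 + exp y)) := by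
        refine lintegral_congr fun y => ?_
        rw [← ofReal_Fs hfin, ← ENNReal.ofReal_mul (Fs_nonneg ν y), mul_one_div]
    _ = ∫⁻ y, ENNReal.ofReal (hY y - y) ∂ν := by
        rw [lintegral_measure_Iic_mul volume (by fun_prop)]
        simp_rw [lintegral_Ici_one_div_one_add_exp]
    _ = ∫⁻ x, (ν (Iic x) - ν.map hY (Iic x)) :=
        (lintegral_measure_Iic_sub_map measurable_hY le_hY hfin).symm
    _ = ∫⁻ x, ENNReal.ofReal (Fs ν x - Fs (ν.map hY) x) := by
        refine lintegral_congr fun x => ?_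
        rw [ENNReal.ofReal_sub _ (Fs_nonneg _ x), ofReal_Fs hfin, ofReal_Fs hκ]

lemma Fs_map_hY_le_Fs (hfin : ∀ x, ν (Iic x) < ⊤) (x : ℝ) : Fs (ν.map hY) x ≤ Fs ν x :=
  ENNReal.toReal_mono (hfin x).ne (map_hY_Iic_le ν x)

lemma IsStationaryY.integrable_Fs_sub_Fs_map_hY [IsProbabilityMeasure μ]
    (hν : IsStationaryY μ ν) (hμ : MemLp id 2 μ) (hmean : ∫ z, z ∂μ = 0)
    (hfin : ∀ x, ν (Iic x) < ⊤) (hρ : 0 < ρ)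
    (hasym : (fun x => Fs ν x - (x + c)) =O[atTop] fun x => exp (-ρ * x)) :
    Integrable fun x => Fs ν x - Fs (ν.map hY) x := by
  simp_rw [hν.Fs_sub_Fs_map_hY hfin]
  exact integrable_integral_increment hμ hmean (integrable_Fs_map_hY_sub_ramp hfin hρ hasym)

lemma IsStationaryY.integral_Fs_sub_Fs_map_hY [IsProbabilityMeasure μ]
    (hν : IsStationaryY μ ν) (hμ : MemLp id 2 μ) (hmean : ∫ z, z ∂μ = 0)
    (hfin : ∀ x, ν (Iic x) < ⊤) (hρ : 0 < ρ)
    (hasym : (fun x => Fs ν x - (x + c)) =O[atTop] fun x => exp (-ρ * x)) :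
    ∫ x, (Fs ν x - Fs (ν.map hY) x) = (∫ z, z ^ 2 ∂μ) / 2 := by
  simp_rw [hν.Fs_sub_Fs_map_hY hfin]
  exact integral_integral_increment hμ hmean (integrable_Fs_map_hY_sub_ramp hfin hρ hasym)

lemma Fs_div_one_add_exp_nonneg (ν : Measure ℝ) (y : ℝ) : 0 ≤ Fs ν y / (1 + exp y) :=
  div_nonneg (Fs_nonneg ν y) (by positivity)

lemma measurable_Fs_div_one_add_exp (ν : Measure ℝ) :
    Measurable fun y => Fs ν y / (1 + exp y) :=
  (measurable_Fs ν).div (by fun_prop)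

theorem IsStationaryY.integrable_Fs_div_one_add_exp [IsProbabilityMeasure μ]
    (hν : IsStationaryY μ ν) (hμ : MemLp id 2 μ) (hmean : ∫ z, z ∂μ = 0)
    (hfin : ∀ x, ν (Iic x) < ⊤) (hρ : 0 < ρ)
    (hasym : (fun x => Fs ν x - (x + c)) =O[atTop] fun x => exp (-ρ * x)) :
    Integrable fun y => Fs ν y / (1 + exp y) := by
  have hdiff := hν.integrable_Fs_sub_Fs_map_hY hμ hmean hfin hρ hasym
  rw [← lintegral_ofReal_ne_top_iff_integrable
      (measurable_Fs_div_one_add_exp ν).aestronglyMeasurable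
      (Eventually.of_forall (Fs_div_one_add_exp_nonneg ν)),
    lintegral_Fs_div_one_add_exp hfin]
  exact hdiff.lintegral_lt_top.ne

theorem IsStationaryY.integral_Fs_div_one_add_exp [IsProbabilityMeasure μ]
    (hν : IsStationaryY μ ν) (hμ : MemLp id 2 μ) (hmean : ∫ z, z ∂μ = 0)
    (hfin : ∀ x, ν (Iic x) < ⊤) (hρ : 0 < ρ)
    (hasym : (fun x => Fs ν x - (x + c)) =O[atTop] fun x => exp (-ρ * x)) :
    ∫ y, Fs ν y / (1 + exp y) = (∫ z, z ^ 2 ∂μ) / 2 := by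
  calc ∫ y, Fs ν y / (1 + exp y)
      = ∫ x, (Fs ν x - Fs (ν.map hY) x) := by
        rw [integral_eq_lintegral_of_nonneg_ae
            (Eventually.of_forall (Fs_div_one_add_exp_nonneg ν))
            (measurable_Fs_div_one_add_exp ν).aestronglyMeasurable,
          lintegral_Fs_div_one_add_exp hfin,
          ← integral_eq_lintegral_of_nonneg_ae
            (Eventually.of_forall fun x => sub_nonneg.2 (Fs_map_hY_le_Fs hfin x))
            ((measurable_Fs ν).sub (measurable_Fs _)).aestronglyMeasurable]
    _ = (∫ z, z ^ 2 ∂μ) / 2 := hν.integral_Fs_sub_Fs_map_hY hμ hmean hfin hρ hasym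

end StationaryChain

/-! ### The tail functional -/

section TailFunctional

variable {k a A : ℝ} {f G H : ℝ → ℝ}

lemma Lk_reflect_div (k C : ℝ) (f : ℝ → ℝ) :
    Lk k (fun x => f (k - x) / C) = (1 / C) * ∫ y, f y / (1 + exp y) := by
  unfold Lk
  rw [integral_sub_left_eq_self (fun y => f y / C / (1 + exp y)) volume k, ← integral_const_mul]
  exact integral_congr_ae (Eventually.of_forall fun y => by ring)

lemma integrable_reflect_div (hf : Integrable fun y => f y / (1 + exp y)) (k C : ℝ) :
    Integrable fun x => f (k - x) / C / (1 + exp (k - x)) := by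
  simpa only [div_right_comm] using (hf.comp_sub_left k).div_const C

lemma one_div_one_add_exp_le (u : ℝ) : 1 / (1 + exp u) ≤ exp (-u) := by
  rw [exp_neg, ← one_div]
  gcongr
  linarith

lemma abs_Lk_sub_Lk_le (ha : a < 1) (hG : Measurable G)
    (hH : Measurable H) (hHint : Integrable fun x => H x / (1 + exp (k - x)))
    (hpos : ∀ x > 0, G x = H x) (hnonpos : ∀ x ≤ 0, |G x - H x| ≤ A * exp (-a * x)) :
    |Lk k G - Lk k H| ≤ A / (1 - a) * exp (-k) := by
  let B : ℝ → ℝ := (Iic 0).indicator fun x => A * exp (-k) * exp ((1 - a) * x)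
  have hdom : ∀ x, ‖(G x - H x) / (1 + exp (k - x))‖ ≤ B x := fun x => by
    rcases le_or_gt x 0 with hx | hx
    · calc ‖(G x - H x) / (1 + exp (k - x))‖
          = |G x - H x| * (1 / (1 + exp (k - x))) := by
            rw [norm_div, norm_eq_abs, norm_of_nonneg (by positivity), mul_one_div]
        _ ≤ A * exp (-a * x) * exp (-(k - x)) :=
            mul_le_mul (hnonpos x hx) (one_div_one_add_exp_le _) (by positivity)
              ((abs_nonneg _).trans (hnonpos x hx))
        _ = B x := by
            simp only [B, indicator_of_mem (mem_Iic.2 hx), mul_assoc, ← exp_add]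
            ring_nf
    · simp [B, hpos x hx, hx]
  have hB : Integrable B := (integrable_indicator_iff measurableSet_Iic).2
    ((integrableOn_exp_mul_Iic (sub_pos.2 ha) 0).const_mul _)
  have hdiff : Integrable fun x => (G x - H x) / (1 + exp (k - x)) :=
    hB.mono' ((hG.sub hH).div (by fun_prop)).aestronglyMeasurable (Eventually.of_forall hdom)
  have hGint : Integrable fun x => G x / (1 + exp (k - x)) :=
    (hdiff.add hHint).congr (Eventually.of_forall fun x => by
      simp only [Pi.add_apply, sub_div, sub_add_cancel])
  calc |Lk k G - Lk k H|
      = |∫ x, (G x - H x) / (1 + exp (k - x))| := by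
        simp_rw [sub_div]
        rw [integral_sub hGint hHint, Lk, Lk]
    _ ≤ ∫ x, B x := norm_integral_le_of_norm_le hB (Eventually.of_forall hdom)
    _ = A / (1 - a) * exp (-k) := by
        rw [integral_indicator measurableSet_Iic, integral_const_mul,
          integral_exp_mul_Iic (sub_pos.2 ha), mul_zero, exp_zero]
        ring

variable {νl νr : Measure ℝ}

lemma CkDH_nonneg (νl νr : Measure ℝ) (k : ℝ) : 0 ≤ CkDH νl νr k :=
  add_nonneg (Fs_nonneg νr k) (Fs_nonneg νl k)

lemma measurable_GkDH (νl νr : Measure ℝ) (k : ℝ) : Measurable (GkDH νl νr k) :=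
  Measurable.ite measurableSet_Ici
    (((measurable_Fs νr).comp (measurable_id.const_sub k)).div_const _)
    ((((measurable_Fs νl).comp (measurable_id.add_const k)).div_const _).const_sub 1)

lemma GkDH_mem_Icc (hfinl : ∀ x, νl (Iic x) < ⊤) (hfinr : ∀ x, νr (Iic x) < ⊤) (k x : ℝ) :
    GkDH νl νr k x ∈ Icc 0 1 := by
  have hC := CkDH_nonneg νl νr k
  rw [GkDH]
  split_ifs with hx
  · have hle : Fs νr (k - x) ≤ CkDH νl νr k :=
      (monotone_Fs hfinr (sub_le_self k hx)).trans (le_add_of_nonneg_right (Fs_nonneg νl k))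
    exact ⟨div_nonneg (Fs_nonneg _ _) hC, div_le_one_of_le₀ hle hC⟩
  · have hle : Fs νl (x + k) ≤ CkDH νl νr k :=
      (monotone_Fs hfinl (add_le_of_nonpos_left (not_le.1 hx).le)).trans
        (le_add_of_nonneg_left (Fs_nonneg νr k))
    exact ⟨sub_nonneg.2 (div_le_one_of_le₀ hle hC), sub_le_self _ (div_nonneg (Fs_nonneg _ _) hC)⟩

lemma eventually_Fs_div_CkDH_le (νl : Measure ℝ)
    (hlin : (fun x => Fs νr x - x) =O[atTop] fun _ => (1 : ℝ)) :
    ∀ᶠ k in atTop, ∀ x ≤ 0, Fs νr (k - x) / CkDH νl νr k ≤ 3 * exp (-(1 / 2) * x) := by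
  obtain ⟨b, hb⟩ := hlin.bound
  obtain ⟨x₀, hx₀⟩ := eventually_atTop.1 hb
  simp only [norm_eq_abs, abs_one, mul_one, abs_le] at hx₀
  filter_upwards [eventually_ge_atTop x₀, eventually_ge_atTop (2 * b + 1)] with k hk hkb x hx
  have hC : k - b ≤ CkDH νl νr k := by
    rw [CkDH]
    linarith [hx₀ k hk, Fs_nonneg νl k]
  have hb_nonneg : 0 ≤ b := by linarith [hx₀ k hk]
  have hexp : 1 - x / 2 ≤ exp (-(1 / 2) * x) := by linarith [add_one_le_exp (-(1 / 2) * x)]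
  rw [div_le_iff₀ (by linarith)]
  calc Fs νr (k - x)
      ≤ k - x + b := by linarith [hx₀ (k - x) (by linarith)]
    _ ≤ 3 * (1 - x / 2) * CkDH νl νr k := by nlinarith
    _ ≤ 3 * exp (-(1 / 2) * x) * CkDH νl νr k := by
        gcongr
        exact CkDH_nonneg νl νr k

theorem eventually_abs_Lk_GkDH_sub_le (hfinl : ∀ x, νl (Iic x) < ⊤)
    (hfinr : ∀ x, νr (Iic x) < ⊤) (hint : Integrable fun y => Fs νr y / (1 + exp y))
    (hlin : (fun x => Fs νr x - x) =O[atTop] fun _ => (1 : ℝ)) :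
    ∀ᶠ k in atTop, |Lk k (GkDH νl νr k) - (1 / CkDH νl νr k) * ∫ y, Fs νr y / (1 + exp y)| ≤
      6 * exp (-k) := by
  filter_upwards [eventually_Fs_div_CkDH_le νl hlin] with k hk
  have hmeas : Measurable fun x => Fs νr (k - x) / CkDH νl νr k :=
    ((measurable_Fs νr).comp (measurable_id.const_sub k)).div_const _
  have hpos : ∀ x > 0, GkDH νl νr k x = Fs νr (k - x) / CkDH νl νr k :=
    fun x hx => if_pos hx.le
  have hnonpos : ∀ x ≤ 0, |GkDH νl νr k x - Fs νr (k - x) / CkDH νl νr k| ≤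
      3 * exp (-(1 / 2) * x) := fun x hx => by
    have hG := GkDH_mem_Icc hfinl hfinr k x
    have hexp : 1 ≤ exp (-(1 / 2) * x) := one_le_exp (by linarith)
    exact abs_sub_le_of_nonneg_of_le hG.1 (by linarith [hG.2])
      (div_nonneg (Fs_nonneg _ _) (CkDH_nonneg νl νr k)) (hk x hx)
  rw [← Lk_reflect_div]
  refine (abs_Lk_sub_Lk_le (by norm_num) (measurable_GkDH νl νr k) hmeas
    (integrable_reflect_div hint k _) hpos hnonpos).trans_eq ?_
  norm_num

end TailFunctional

/-! ### Increments with a density -/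

section IncrementDensity

lemma memLp_of_measure_norm_gt_le_exp {α E : Type*} {m : MeasurableSpace α} {μ : Measure α}
    [NormedAddCommGroup E] {f : α → E} (hf : AEStronglyMeasurable f μ) {C δ : ℝ} (hδ : 0 < δ)
    (htail : ∀ x > 0, μ {a | x < ‖f a‖} ≤ ENNReal.ofReal (C * exp (-δ * x))) {p : ℝ≥0∞}
    (hp : p ≠ ⊤) : MemLp f p μ := by
  rcases eq_or_ne p 0 with rfl | hp0
  · exact memLp_zero_iff_aestronglyMeasurable.2 hf
  have hq : 0 < p.toReal := ENNReal.toReal_pos hp0 hp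
  have hmaj : IntegrableOn (fun x => C * (x ^ (p.toReal - 1) * exp (-δ * x))) (Ioi 0) := by
    simpa only [IntegrableOn, rpow_one] using (integrableOn_rpow_mul_exp_neg_mul_rpow
      (s := p.toReal - 1) (by linarith) one_pos hδ).const_mul C
  refine (integrable_norm_rpow_iff hf hp0 hp).1 ?_
  rw [← lintegral_ofReal_ne_top_iff_integrable
      (hf.norm.aemeasurable.pow_const _).aestronglyMeasurable
      (Eventually.of_forall fun a => by positivity),
    lintegral_rpow_eq_lintegral_meas_lt_mul _ (Eventually.of_forall fun a => norm_nonneg _)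
      hf.norm.aemeasurable hq]
  refine ENNReal.mul_ne_top ENNReal.ofReal_ne_top (ne_top_of_le_ne_top hmaj.lintegral_lt_top.ne ?_)
  refine setLIntegral_mono' measurableSet_Ioi fun x hx => ?_
  calc μ {a | x < ‖f a‖} * ENNReal.ofReal (x ^ (p.toReal - 1))
      ≤ ENNReal.ofReal (C * exp (-δ * x)) * ENNReal.ofReal (x ^ (p.toReal - 1)) := by
        gcongr
        exact htail x hx
    _ = ENNReal.ofReal (C * (x ^ (p.toReal - 1) * exp (-δ * x))) := by
        rw [← ENNReal.ofReal_mul' (rpow_nonneg (mem_Ioi.1 hx).le _)]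
        ring_nf

/-- The law on `ℝ` with density `ζ`. -/
noncomputable def incrementLaw (ζ : ℝ → ℝ) : Measure ℝ :=
  volume.withDensity fun x => ENNReal.ofReal (ζ x)

variable {ζ : ℝ → ℝ}

lemma isProbabilityMeasure_incrementLaw (hnn : ∀ x, 0 ≤ ζ x) (hprob : ∫ x, ζ x = 1) :
    IsProbabilityMeasure (incrementLaw ζ) := by
  constructor
  rw [incrementLaw, withDensity_apply _ MeasurableSet.univ, setLIntegral_univ,
    ← ofReal_integral_eq_lintegral_ofReal (Integrable.of_integral_ne_zero (by simp [hprob]))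
      (Eventually.of_forall hnn), hprob, ENNReal.ofReal_one]

lemma integral_incrementLaw (hζ : Measurable ζ) (hnn : ∀ x, 0 ≤ ζ x) (g : ℝ → ℝ) :
    ∫ x, g x ∂incrementLaw ζ = ∫ x, g x * ζ x := by
  rw [incrementLaw, integral_withDensity_eq_integral_toReal_smul hζ.ennreal_ofReal
    (Eventually.of_forall fun x => ENNReal.ofReal_lt_top)]
  simp only [ENNReal.toReal_ofReal (hnn _), smul_eq_mul, mul_comm]

lemma memLp_id_incrementLaw (hnn : ∀ x, 0 ≤ ζ x) (hint : Integrable ζ) {C δ : ℝ} (hδ : 0 < δ)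
    (htail : ∀ x, 0 ≤ x → ∫ y in {y : ℝ | x < |y|}, ζ y ≤ C * exp (-δ * x)) {p : ℝ≥0∞}
    (hp : p ≠ ⊤) : MemLp id p (incrementLaw ζ) := by
  refine memLp_of_measure_norm_gt_le_exp (C := C) aestronglyMeasurable_id hδ (fun x hx => ?_) hp
  have hset : MeasurableSet {y : ℝ | x < |y|} := measurableSet_lt measurable_const measurable_norm
  calc incrementLaw ζ {y | x < ‖id y‖}
      = ENNReal.ofReal (∫ y in {y : ℝ | x < |y|}, ζ y) := by
        rw [ofReal_integral_eq_lintegral_ofReal hint.integrableOn (Eventually.of_forall hnn)]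
        exact withDensity_apply _ hset
    _ ≤ ENNReal.ofReal (C * exp (-δ * x)) := ENNReal.ofReal_le_ofReal (htail x hx.le)

lemma neg_incrementLaw (hζ : Measurable ζ) :
    (incrementLaw ζ).neg = incrementLaw fun x => ζ (-x) := by
  ext s hs
  rw [Measure.neg_apply, incrementLaw, incrementLaw, withDensity_apply _ hs.neg,
    withDensity_apply _ hs]
  simpa only [neg_neg, neg_preimage] using
    (Measure.measurePreserving_neg volume).setLIntegral_comp_preimage hs
      (f := fun x => ENNReal.ofReal (ζ (-x))) (by fun_prop)

lemma IsInvariantY.isStationaryY {ν : Measure ℝ} [SFinite ν] (hζ : Measurable ζ)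
    (hν : IsInvariantY ζ ν) : IsStationaryY (incrementLaw ζ) ν := by
  have : SFinite (incrementLaw ζ) := by unfold incrementLaw; infer_instance
  refine Measure.ext_of_lintegral _ fun g hg => ?_
  calc ∫⁻ x, g x ∂(incrementLaw ζ ∗ ν.map hY)
      = ∫⁻ z, ∫⁻ y, g (z + hY y) ∂ν ∂incrementLaw ζ := by
        rw [Measure.lintegral_conv hg]
        exact lintegral_congr fun z => lintegral_map (by fun_prop) measurable_hY
    _ = ∫⁻ y, ∫⁻ z, g (z + hY y) ∂incrementLaw ζ ∂ν :=
        lintegral_lintegral_swap (hg.comp (measurable_fst.add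
          (measurable_hY.comp measurable_snd))).aemeasurable
    _ = ∫⁻ y, ∫⁻ z, g (z + hY y) * ENNReal.ofReal (ζ z) ∂volume ∂ν := by
        refine lintegral_congr fun y => ?_
        rw [incrementLaw, lintegral_withDensity_eq_lintegral_mul _ (by fun_prop) (by fun_prop)]
        simp only [Pi.mul_apply, mul_comm]
    _ = ∫⁻ x, g x ∂ν := (hν g hg).symm

end IncrementDensity

lemma integral_measure_neg (μ : Measure ℝ) (g : ℝ → ℝ) : ∫ z, g z ∂μ.neg = ∫ z, g (-z) ∂μ :=
  (MeasurableEquiv.neg ℝ).measurableEmbedding.integral_map g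

lemma isBigO_of_abs_le {f g : ℝ → ℝ} {C x₁ : ℝ} (h : ∀ x ≥ x₁, |f x| ≤ C * g x) (hg : 0 ≤ g) :
    f =O[atTop] g := by
  refine .of_bound C ((eventually_ge_atTop x₁).mono fun x hx => ?_)
  rw [norm_of_nonneg (hg x)]
  exact h x hx

lemma isBigO_sub_self_of_isBigO_sub_add_const {F : ℝ → ℝ} {c ρ : ℝ} (hρ : 0 < ρ)
    (hasym : (fun x => F x - (x + c)) =O[atTop] fun x => exp (-ρ * x)) :
    (fun x => F x - x) =O[atTop] fun _ => (1 : ℝ) := by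
  have hdecay : Tendsto (fun x => exp (-ρ * x)) atTop (nhds 0) :=
    tendsto_exp_atBot.comp (tendsto_id.const_mul_atTop_of_neg (neg_lt_zero.2 hρ))
  simpa only [sub_add_cancel_right, sub_add_eq_sub_sub, sub_add_cancel] using
    ((hasym.trans (hdecay.isBigO_one ℝ)).add (isBigO_const_const c one_ne_zero atTop))

theorem stmt12_general {μ νl νr : Measure ℝ} [IsProbabilityMeasure μ] (hμ : MemLp id 2 μ)
    (hmean : ∫ z, z ∂μ = 0) (hstatl : IsStationaryY μ νl) (hstatr : IsStationaryY μ.neg νr)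
    (hfinl : ∀ x, νl (Iic x) < ⊤) (hfinr : ∀ x, νr (Iic x) < ⊤) {cl cr ρ : ℝ} (hρ : 0 < ρ)
    (hasyml : (fun x => Fs νl x - (x + cl)) =O[atTop] fun x => exp (-ρ * x))
    (hasymr : (fun x => Fs νr x - (x + cr)) =O[atTop] fun x => exp (-ρ * x)) :
    ∀ᶠ k in atTop,
      |Lk k (GkDH νl νr k) - (1 / CkDH νl νr k) * ∫ y, Fs νr y / (1 + exp y)| ≤ 6 * exp (-k) ∧
      |Lk k (GkDH νl νr k) - (1 / CkDH νl νr k) * ∫ y, Fs νl y / (1 + exp y)| ≤ 6 * exp (-k) := by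
  have : IsProbabilityMeasure μ.neg := Measure.isProbabilityMeasure_map measurable_neg.aemeasurable
  have hμneg : MemLp id 2 μ.neg :=
    (memLp_map_measure_iff aestronglyMeasurable_id measurable_neg.aemeasurable).2 hμ.neg
  have hmeanneg : ∫ z, z ∂μ.neg = 0 := by
    rw [integral_measure_neg, integral_neg, hmean, neg_zero]
  have hsqneg : ∫ z, z ^ 2 ∂μ.neg = ∫ z, z ^ 2 ∂μ := by
    simp only [integral_measure_neg, neg_sq]
  have hint := hstatr.integrable_Fs_div_one_add_exp hμneg hmeanneg hfinr hρ hasymr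
  have heq : ∫ y, Fs νr y / (1 + exp y) = ∫ y, Fs νl y / (1 + exp y) := by
    rw [hstatr.integral_Fs_div_one_add_exp hμneg hmeanneg hfinr hρ hasymr,
      hstatl.integral_Fs_div_one_add_exp hμ hmean hfinl hρ hasyml, hsqneg]
  filter_upwards [eventually_abs_Lk_GkDH_sub_le hfinl hfinr hint
    (isBigO_sub_self_of_isBigO_sub_add_const hρ hasymr)] with k hk
  exact ⟨hk, heq ▸ hk⟩

/-- Lemma: asymptotics of L_k[G_k] as k → ∞. -/
theorem stmt12
    (ζ : ℝ → ℝ) (hζmeas : Measurable ζ) (hζnn : ∀ x, 0 ≤ ζ x)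
    (hζprob : ∫ x, ζ x = 1)
    (hmean : ∫ x, x * ζ x = 0)
    (δ : ℝ) (hδ : 0 < δ) (Cδ : ℝ)
    (htail : ∀ x : ℝ, 0 ≤ x → ∫ y in {y : ℝ | x < |y|}, ζ y ≤ Cδ * Real.exp (-δ * x))
    (θ : ℝ) (hθ0 : 0 < θ) (hθ1 : θ ≤ 1) (Cθ : ℝ)
    (hHolder : ∀ x y : ℝ, |ζ x - ζ y| ≤ Cθ * |x - y| ^ θ)
    (νl νr : Measure ℝ)
    (hinvl : IsInvariantY ζ νl) (hinvr : IsInvariantY (fun x => ζ (-x)) νr)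
    (hfinl : ∀ x : ℝ, νl (Set.Iic x) < ⊤) (hfinr : ∀ x : ℝ, νr (Set.Iic x) < ⊤)
    (cl cr ρ : ℝ) (hρ0 : 0 < ρ) (hρ1 : ρ < 1) (Ca : ℝ) (x₁ : ℝ)
    (hasyml : ∀ x ≥ x₁, |(νl (Set.Iic x)).toReal - (x + cl)| ≤ Ca * Real.exp (-ρ * x))
    (hasymr : ∀ x ≥ x₁, |(νr (Set.Iic x)).toReal - (x + cr)| ≤ Ca * Real.exp (-ρ * x))
 :
    ∃ C > 0, ∃ k₀ : ℝ, ∀ k ≥ k₀,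
      |Lk k (GkDH νl νr k) - (1 / CkDH νl νr k) * ∫ y, Fs νr y / (1 + Real.exp y)|
          ≤ C * Real.exp (-k) ∧
        |Lk k (GkDH νl νr k) - (1 / CkDH νl νr k) * ∫ y, Fs νl y / (1 + Real.exp y)|
          ≤ C * Real.exp (-k) := by
  have hint : Integrable ζ := .of_integral_ne_zero (by simp [hζprob])
  have := isProbabilityMeasure_incrementLaw hζnn hζprob
  have := sigmaFinite_of_measure_Iic_lt_top hfinl
  have := sigmaFinite_of_measure_Iic_lt_top hfinr
  have hstatr : IsStationaryY (incrementLaw ζ).neg νr :=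
    neg_incrementLaw hζmeas ▸ hinvr.isStationaryY (by fun_prop)
  exact ⟨6, by norm_num, eventually_atTop.1 <| stmt12_general
    (memLp_id_incrementLaw hζnn hint hδ htail (by norm_num))
    ((integral_incrementLaw hζmeas hζnn _).trans hmean) (hinvl.isStationaryY hζmeas) hstatr
    hfinl hfinr hρ0 (isBigO_of_abs_le hasyml fun x => (exp_pos _).le)
    (isBigO_of_abs_le hasymr fun x => (exp_pos _).le)⟩
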